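/- Let X and Y be finite simple graphs on n vertices such that ψ(X,t,μ) = ψ(Y,t,μ) and ψ(X̄,t,μ) = ψ(Ȳ,t,μ). Then for every finite simple graph H, ψ(X ∨ H,t,μ) = ψ(Y ∨ H,t,μ) and ψ(complement of X ∨ H, t, μ) = ψ(complement of Y ∨ H, t, μ). -/

import Mathlib

/-!
Everything is tested at real points: `ψ(G)` is determined by the numbers `det N_G(t, m)`, where
`N_G(t, m) = t I - A(G) + m D(G)` (`psi_eq_iff`). Write `J` for an all-ones matrix of any shape.

* Complementing only adds `J` and moves the point: `N_{Gᶜ}(t, m) = -(N_G(s, m) + J)` with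
  `s = -(t + 1 + m (|V| - 1))` (`evalMat_compl`). So the hypotheses say precisely that
  `det N` and `det (N + J)` agree for `X` and `Y` at all real points.
* `N_{X ∨ H}(t, m)` has diagonal blocks `N_X(t + m |W|, m)` and `N_H(t + m |V|, m)`, and
  off-diagonal blocks `-J` (`evalMat_joinG`). Since `J` has rank one, the determinant of
  `[[P, -J], [-J, Q]]` depends on `P` only through `det P` and `det (P + J)`
  (`det_fromBlocks_neg_ones`), which settles the join.
* Adding `J` to `N_{X ∨ H}` cancels the off-diagonal blocks, so `det (N_{X ∨ H} + J)` is
  `det (N_X + J) * det (N_H + J)` at shifted points, which settles the complement of the join.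
-/

open Matrix

open Classical in
noncomputable def adjMat {V : Type*} (G : SimpleGraph V) : Matrix V V ℝ :=
  Matrix.of fun a b => if G.Adj a b then 1 else 0

noncomputable def gdeg {V : Type*} (G : SimpleGraph V) (v : V) : ℕ :=
  Nat.card (G.neighborSet v)

noncomputable def degMat {V : Type*} [DecidableEq V] (G : SimpleGraph V) : Matrix V V ℝ :=
  Matrix.diagonal fun v => (gdeg G v : ℝ)

/-- Two graphs (on possibly different vertex types of the same cardinality) are
degree similar if there is an invertible real matrix conjugating the adjacency
matrix of the first to that of the second, and likewise for the degree matrices. -/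
def DegreeSimilar {V W : Type*} [Fintype V] [Fintype W] [DecidableEq V] [DecidableEq W]
    (G : SimpleGraph V) (H : SimpleGraph W) : Prop :=
  ∃ (e : V ≃ W) (M : Matrix V V ℝ), IsUnit M ∧
    M⁻¹ * adjMat G * M = (adjMat H).submatrix ⇑e ⇑e ∧
    M⁻¹ * degMat G * M = (degMat H).submatrix ⇑e ⇑e

/-- The generalized characteristic polynomial `ψ(X,t,μ) = det(tI - (A - μ D))`. -/
noncomputable def psi {V : Type*} [Fintype V] [DecidableEq V] (G : SimpleGraph V) :
    Polynomial (Polynomial ℝ) :=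
  Matrix.charpoly
    ((adjMat G).map Polynomial.C - (Polynomial.X : Polynomial ℝ) • (degMat G).map Polynomial.C)

/-- The join of two graphs: the disjoint union together with all edges between them. -/
def joinG {V W : Type*} (G : SimpleGraph V) (H : SimpleGraph W) :
    SimpleGraph (V ⊕ W) :=
  SimpleGraph.fromRel fun a b =>
    match a, b with
    | Sum.inl a, Sum.inl b => G.Adj a b
    | Sum.inr a, Sum.inr b => H.Adj a b
    | _, _ => True

/-- The all-ones matrix `J`, of any shape. -/
def ones (V W : Type*) : Matrix V W ℝ := Matrix.of fun _ _ => 1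

/-- The real matrix `t I - A(G) + m D(G)`, whose determinant is the value of `psi G` at
`μ = m` and the outer variable `t`. -/
noncomputable def evalMat {V : Type*} [DecidableEq V] (G : SimpleGraph V) (t m : ℝ) :
    Matrix V V ℝ :=
  t • (1 : Matrix V V ℝ) - adjMat G + m • degMat G

theorem eval_psi {V : Type*} [Fintype V] [DecidableEq V] (G : SimpleGraph V) (t m : ℝ) :
    ((psi G).eval (Polynomial.C t)).eval m = (evalMat G t m).det := by
  rw [psi, Matrix.eval_charpoly, ← Polynomial.coe_evalRingHom, RingHom.map_det]
  congr 1
  ext i j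
  by_cases h : i = j
  · subst h
    simp [evalMat, degMat]
    ring
  · simp [evalMat, degMat, h]

theorem psi_eq_iff {V : Type*} [Fintype V] [DecidableEq V] (G G' : SimpleGraph V) :
    psi G = psi G' ↔ ∀ t m, (evalMat G t m).det = (evalMat G' t m).det := by
  refine ⟨fun h t m => by rw [← eval_psi, ← eval_psi, h], fun h => ?_⟩
  -- The constants `C t` already form an infinite subset of `ℝ[μ]`.
  refine Polynomial.eq_of_infinite_eval_eq _ _
    ((Set.infinite_range_of_injective (Polynomial.C_injective (R := ℝ))).mono ?_)
  rintro _ ⟨t, rfl⟩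
  refine Polynomial.funext fun m => ?_
  rw [eval_psi, eval_psi, h]

theorem gdeg_eq_sum {V : Type*} [Fintype V] (G : SimpleGraph V) (v : V) :
    (gdeg G v : ℝ) = ∑ u, adjMat G v u := by
  classical
  simp only [gdeg, adjMat, Matrix.of_apply, Finset.sum_boole]
  rw [Nat.card_eq_fintype_card, Fintype.card_subtype]
  simp only [SimpleGraph.mem_neighborSet]

theorem adjMat_compl {V : Type*} [DecidableEq V] (G : SimpleGraph V) :
    adjMat Gᶜ = ones V V - 1 - adjMat G := by
  ext u v
  by_cases h : u = v
  · simp [adjMat, ones, h]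
  · by_cases h' : G.Adj u v <;> simp [adjMat, ones, h, h']

theorem gdeg_compl {V : Type*} [Fintype V] (G : SimpleGraph V) (v : V) :
    (gdeg Gᶜ v : ℝ) = Fintype.card V - 1 - gdeg G v := by
  classical
  simp only [gdeg_eq_sum, adjMat_compl, Matrix.sub_apply, Finset.sum_sub_distrib]
  simp [ones, Matrix.one_apply]

theorem evalMat_compl {V : Type*} [Fintype V] [DecidableEq V] (G : SimpleGraph V) (t m : ℝ) :
    evalMat Gᶜ t m = -(evalMat G (-(t + 1 + m * (Fintype.card V - 1))) m + ones V V) := by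
  ext u v
  by_cases h : u = v
  · subst h
    simp [evalMat, adjMat_compl, degMat, gdeg_compl]
    ring
  · simp [evalMat, adjMat_compl, degMat, h]
    ring

theorem adjMat_joinG {V W : Type*} (X : SimpleGraph V) (H : SimpleGraph W) :
    adjMat (joinG X H) = fromBlocks (adjMat X) (ones V W) (ones W V) (adjMat H) := by
  ext (u | u) (v | v)
  · by_cases h : X.Adj u v
    · simp [adjMat, joinG, h, h.ne]
    · simp [adjMat, joinG, h, X.adj_comm v u]
  · simp [adjMat, joinG, ones]
  · simp [adjMat, joinG, ones]
  · by_cases h : H.Adj u v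
    · simp [adjMat, joinG, h, h.ne]
    · simp [adjMat, joinG, h, H.adj_comm v u]

theorem evalMat_joinG {V W : Type*} [Fintype V] [Fintype W] [DecidableEq V] [DecidableEq W]
    (X : SimpleGraph V) (H : SimpleGraph W) (t m : ℝ) :
    evalMat (joinG X H) t m =
      fromBlocks (evalMat X (t + m * Fintype.card W) m) (-ones V W) (-ones W V)
        (evalMat H (t + m * Fintype.card V) m) := by
  ext (u | u) (v | v)
  · by_cases h : u = v
    · subst h
      simp [evalMat, degMat, gdeg_eq_sum, adjMat_joinG, ones]
      ring
    · simp [evalMat, degMat, adjMat_joinG, h]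
  · simp [evalMat, degMat, adjMat_joinG]
  · simp [evalMat, degMat, adjMat_joinG]
  · by_cases h : u = v
    · subst h
      simp [evalMat, degMat, gdeg_eq_sum, adjMat_joinG, ones]
      ring
    · simp [evalMat, degMat, adjMat_joinG, h]

/-- With `s = 1ᵀ P⁻¹ 1` and `q = 1ᵀ Q⁻¹ 1`, both sides equal `det P * det Q * (1 - s * q)`. -/
theorem det_fromBlocks_neg_ones_of_isUnit {V W : Type*} [Fintype V] [Fintype W] [DecidableEq V]
    [DecidableEq W] (P : Matrix V V ℝ) (Q : Matrix W W ℝ) (hP : IsUnit P.det)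
    (hQ : IsUnit Q.det) :
    (fromBlocks P (-ones V W) (-ones W V) Q).det =
      P.det * Q.det - ((P + ones V V).det - P.det) * ((Q + ones W W).det - Q.det) := by
  have hVV : ones V V = ones V Unit * ones Unit V := by ext; simp [ones, Matrix.mul_apply]
  have hWW : ones W W = ones W Unit * ones Unit W := by ext; simp [ones, Matrix.mul_apply]
  have hVW : ones V W = ones V Unit * ones Unit W := by ext; simp [ones, Matrix.mul_apply]
  have hWV : ones W V = ones W Unit * ones Unit V := by ext; simp [ones, Matrix.mul_apply]
  let _ := P.invertibleOfIsUnitDet hP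
  have key : Q - -ones W V * ⅟P * -ones V W =
      Q + ones W Unit * (-(ones Unit V * P⁻¹ * ones V Unit) * ones Unit W) := by
    rw [hVW, hWV, invOf_eq_nonsing_inv]
    simp only [Matrix.neg_mul, Matrix.mul_neg, Matrix.mul_assoc, neg_neg, sub_eq_add_neg]
  rw [det_fromBlocks₁₁, key, det_add_mul _ _ hQ, hVV, hWW, det_add_mul _ _ hP,
    det_add_mul _ _ hQ]
  have h3 : -(ones Unit V * P⁻¹ * ones V Unit) * ones Unit W * Q⁻¹ * ones W Unit =
      -((ones Unit V * P⁻¹ * ones V Unit) * (ones Unit W * Q⁻¹ * ones W Unit)) := by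
    simp only [Matrix.neg_mul, Matrix.mul_assoc]
  rw [h3]
  generalize ones Unit V * P⁻¹ * ones V Unit = S
  generalize ones Unit W * Q⁻¹ * ones W Unit = T
  simp [det_unique, Matrix.mul_apply]
  ring

/-- The determinant identity for arbitrary square blocks: both sides are continuous in `x` after
replacing `P`, `Q` by `P + x I`, `Q + x I`, and for all but finitely many `x` the shifted blocks are
invertible. -/
theorem det_fromBlocks_neg_ones {V W : Type*} [Fintype V] [Fintype W] [DecidableEq V]
    [DecidableEq W] (P : Matrix V V ℝ) (Q : Matrix W W ℝ) :
    (fromBlocks P (-ones V W) (-ones W V) Q).det =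
      P.det * Q.det - ((P + ones V V).det - P.det) * ((Q + ones W W).det - Q.det) := by
  have hroot : ∀ x ∉ ((-P).charpoly.roots.toFinset ∪ (-Q).charpoly.roots.toFinset),
      (P + x • 1).det ≠ 0 ∧ (Q + x • 1).det ≠ 0 := by
    intro x hx
    simp only [Finset.mem_union, Multiset.mem_toFinset, not_or,
      Polynomial.mem_roots (Matrix.charpoly_monic _).ne_zero, Polynomial.IsRoot.def,
      Matrix.eval_charpoly, sub_neg_eq_add] at hx
    simpa only [Matrix.scalar_apply, ← Matrix.smul_one_eq_diagonal, add_comm] using hx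
  have hfun := Continuous.ext_on
    (f := fun x : ℝ => (fromBlocks (P + x • 1) (-ones V W) (-ones W V) (Q + x • 1)).det)
    (g := fun x : ℝ => (P + x • 1).det * (Q + x • 1).det -
      ((P + x • 1 + ones V V).det - (P + x • 1).det) *
        ((Q + x • 1 + ones W W).det - (Q + x • 1).det))
    ((dense_univ (X := ℝ)).sdiff_finset
      ((-P).charpoly.roots.toFinset ∪ (-Q).charpoly.roots.toFinset))
    (by fun_prop) (by fun_prop)
    (fun x hx => det_fromBlocks_neg_ones_of_isUnit _ _ (hroot x hx.2).1.isUnit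
      (hroot x hx.2).2.isUnit)
  simpa using congrFun hfun 0

theorem det_evalMat_joinG_add_ones {V W : Type*} [Fintype V] [Fintype W] [DecidableEq V]
    [DecidableEq W] (X : SimpleGraph V) (H : SimpleGraph W) (t m : ℝ) :
    (evalMat (joinG X H) t m + ones (V ⊕ W) (V ⊕ W)).det =
      (evalMat X (t + m * Fintype.card W) m + ones V V).det *
        (evalMat H (t + m * Fintype.card V) m + ones W W).det := by
  have hJ : ones (V ⊕ W) (V ⊕ W) = fromBlocks (ones V V) (ones V W) (ones W V) (ones W W) := by
    ext (_ | _) (_ | _) <;> rfl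
  rw [evalMat_joinG, hJ, fromBlocks_add, neg_add_cancel, neg_add_cancel, det_fromBlocks_zero₂₁]

theorem psi_compl_eq_iff {V : Type*} [Fintype V] [DecidableEq V] (G G' : SimpleGraph V) :
    psi Gᶜ = psi G'ᶜ ↔
      ∀ t m, (evalMat G t m + ones V V).det = (evalMat G' t m + ones V V).det := by
  rw [psi_eq_iff]
  simp only [evalMat_compl, det_neg]
  refine ⟨fun h t m => ?_, fun h t m => by rw [h]⟩
  -- `t ↦ -(t + 1 + m (|V| - 1))` is an involution.
  have := h (-(t + 1 + m * (Fintype.card V - 1))) m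
  rw [show -(-(t + 1 + m * ((Fintype.card V : ℝ) - 1)) + 1 + m * ((Fintype.card V : ℝ) - 1)) = t
    by ring] at this
  exact mul_left_cancel₀ (pow_ne_zero _ (by norm_num)) this

/-- If `ψ(X,t,μ) = ψ(Y,t,μ)` and `ψ(X̄,t,μ) = ψ(Ȳ,t,μ)`, then for every graph `H`,
`ψ(X ∨ H,t,μ) = ψ(Y ∨ H,t,μ)` and the complements of the joins also share `ψ`. -/
theorem psi_join_eq {V W : Type*} [Fintype V] [Fintype W] [DecidableEq V] [DecidableEq W]
    (X Y : SimpleGraph V) (h1 : psi X = psi Y) (h2 : psi Xᶜ = psi Yᶜ)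
    (H : SimpleGraph W) :
    psi (joinG X H) = psi (joinG Y H) ∧ psi (joinG X H)ᶜ = psi (joinG Y H)ᶜ := by
  rw [psi_eq_iff] at h1
  rw [psi_compl_eq_iff] at h2
  rw [psi_eq_iff, psi_compl_eq_iff]
  refine ⟨fun t m => ?_, fun t m => ?_⟩
  · rw [evalMat_joinG, evalMat_joinG, det_fromBlocks_neg_ones, det_fromBlocks_neg_ones, h1, h2]
  · rw [det_evalMat_joinG_add_ones, det_evalMat_joinG_add_ones, h2]
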